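/- Shared right boundary: let x and y be canonical tokens with x ∈ P(y) and x ≠ y (so y is non-atomic), and let r_j be the canonical rule of y. Let s be a string and suppose that for some stage k with j ≤ k ≤ m, the token y occurs in φ_k(s) with right boundary at position p. Then there exists a stage k′ with 0 ≤ k′ ≤ j − 1 such that x occurs in φ_{k′}(s) with right boundary at the same position p. -/

import Mathlib

/-!
Common BPE formalization preamble.

A token is a (nonempty) string over the alphabet `α`, modeled as `List α`.
A merge rule is a pair of tokens; a dictionary is an ordered list of rules
(earlier rules have strictly higher priority).
-/

namespace BPE

variable {α : Type*} [DecidableEq α]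

/-- A token is a string over the alphabet (nonemptiness is imposed by hypotheses). -/
abbrev Token (α : Type*) := List α

/-- A merge rule is an ordered pair of tokens. -/
abbrev Rule (α : Type*) := Token α × Token α

/-- A dictionary is an ordered list of merge rules; earlier = higher priority. -/
abbrev Dict (α : Type*) := List (Rule α)

/-- Apply a single merge rule to a token list, scanning left to right and replacing
each adjacent occurrence of `r.1` followed by `r.2` by the concatenated token,
resuming the scan after the newly formed token (no overlaps). -/
def applyRule (r : Rule α) : List (Token α) → List (Token α)
  | [] => []
  | [t] => [t]
  | t :: u :: rest =>
      if t = r.1 ∧ u = r.2 then (r.1 ++ r.2) :: applyRule r rest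
      else t :: applyRule r (u :: rest)

/-- `φ₀(s)`: the list of single-character tokens of `s`. -/
def phi0 (s : List α) : List (Token α) := s.map (fun c => [c])

/-- `φ_k(s)`: the token list after applying the first `k` rules of `D` to `s`. -/
def phiK (D : Dict α) (k : ℕ) (s : List α) : List (Token α) :=
  (D.take k).foldl (fun φ r => applyRule r φ) (phi0 s)

/-- The BPE tokenization `𝕋_D(s)`. -/
def tokenize (D : Dict α) (s : List α) : List (Token α) :=
  phiK D D.length s

/-- Detokenization `π`: concatenation of the tokens. -/
def detok (φ : List (Token α)) : List α := φ.flatten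

/-- A dictionary is valid if all rule components are genuine (nonempty) tokens. -/
def ValidDict (D : Dict α) : Prop := ∀ r ∈ D, r.1 ≠ [] ∧ r.2 ≠ []

/-- A token `t` is canonical if `𝕋_D(t) = [t]`. -/
def IsCanonical (D : Dict α) (t : Token α) : Prop := tokenize D t = [t]

/-- The last token `θ(s)`: last element of `𝕋_D(s)` (defaulting to `[]`). -/
def theta (D : Dict α) (s : List α) : Token α := (tokenize D s).getLastD []

/-- `j` (0-based) is the index of the canonical rule of `t`:
`φ_j(t)` has exactly two tokens and `φ_{j+1}(t) = [t]`. -/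
def IsCanonicalRuleIdx (D : Dict α) (t : Token α) (j : ℕ) : Prop :=
  j < D.length ∧ (phiK D j t).length = 2 ∧ phiK D (j + 1) t = [t]

open Classical in
/-- The (0-based) index of the canonical rule of `t` (junk value `0` if none exists). -/
noncomputable def canonIdx (D : Dict α) (t : Token α) : ℕ :=
  if h : ∃ j, IsCanonicalRuleIdx D t j then h.choose else 0

/-- Predecessor `pre(t)`: first token of the two-token stage `φ_{j-1}(t)`. -/
noncomputable def pre (D : Dict α) (t : Token α) : Token α :=
  (phiK D (canonIdx D t) t).headD []

/-- Successor `suc(t)`: second token of the two-token stage `φ_{j-1}(t)`. -/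
noncomputable def suc (D : Dict α) (t : Token α) : Token α :=
  (phiK D (canonIdx D t) t).getLastD []

/-- `InPath D x a` means `a ∈ P(x)`: `a` is obtained from `x` by iterating `suc`,
i.e. `a` lies on the ancestor path of `x` in the Successor Forest. -/
def InPath (D : Dict α) (x a : Token α) : Prop :=
  ∃ n : ℕ, (suc D)^[n] x = a

/-- `s` with the suffix `u` removed. -/
def dropSuffix (s u : List α) : List α := s.take (s.length - u.length)

/-- The Prefix Last-Token Condition of the canonical suffix token `t`
with respect to the string `s`. Atomic tokens satisfy it by definition;
a non-atomic token must satisfy Reachability and Priority dominance. -/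
def PLTC (D : Dict α) (s t : Token α) : Prop :=
  t.length = 1 ∨
    (1 < t.length ∧
      InPath D (theta D (dropSuffix s (suc D t))) (pre D t) ∧
      (theta D (dropSuffix s (suc D t)) ≠ pre D t →
        ∀ u : Token α, 1 < u.length → IsCanonical D u → suc D u = pre D t →
          InPath D (theta D (dropSuffix s (suc D t))) u →
          canonIdx D t < canonIdx D u))


/-- `y` occurs in `φ` with right boundary at position `p`:
`φ = a ++ [y] ++ b` with `|π(a)| + |y| = p`. -/
def OccursAt (y : Token α) (φ : List (Token α)) (p : ℕ) : Prop :=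
  ∃ a b : List (Token α), φ = a ++ [y] ++ b ∧ (detok a).length + y.length = p

/-!
A token boundary present at stage `k` was present at every earlier stage, and rules never merge
across it. So a token `t` occurring in `φ_k(s)` has been tokenized up to stage `k` exactly as the
string `t` on its own: for `i ≤ k`, the segment of `φ_i(s)` under `t` is `φ_i(t)`. At the stage of
the canonical rule of `t` this segment ends with `suc(t)`, which therefore shares the right boundary
of `t`; iterating walks down the ancestor path.
-/

section ApplyRules

/-- Successive application of the merge rules of `R`, first rule first; the stage `φ_k(s)` is
`applyRules (D.take k) (phi0 s)` by definition. -/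
def applyRules (R : List (Rule α)) (φ : List (Token α)) : List (Token α) :=
  R.foldl (fun φ r => applyRule r φ) φ

theorem detok_applyRule (r : Rule α) (φ : List (Token α)) :
    detok (applyRule r φ) = detok φ := by
  induction φ using applyRule.induct r <;> grind [applyRule, detok]

theorem detok_applyRules (R : List (Rule α)) (φ : List (Token α)) :
    detok (applyRules R φ) = detok φ := by
  induction R generalizing φ with
  | nil => rfl
  | cons r R ih => exact (ih _).trans (detok_applyRule r φ)

theorem length_applyRule_le (r : Rule α) (φ : List (Token α)) :
    (applyRule r φ).length ≤ φ.length := by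
  induction φ using applyRule.induct r <;> grind [applyRule]

theorem length_applyRules_le (R : List (Rule α)) (φ : List (Token α)) :
    (applyRules R φ).length ≤ φ.length := by
  induction R generalizing φ with
  | nil => rfl
  | cons r R ih => exact (ih _).trans (length_applyRule_le r φ)

theorem exists_append_of_applyRule_eq_append {r : Rule α} {φ P Q : List (Token α)}
    (h : applyRule r φ = P ++ Q) :
    ∃ P' Q', φ = P' ++ Q' ∧ applyRule r P' = P ∧ applyRule r Q' = Q := by
  induction φ using applyRule.induct r generalizing P with
  | case1 => exact ⟨[], [], by simp_all [applyRule]⟩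
  | case2 t =>
    rcases P with _ | ⟨a, P⟩
    · exact ⟨[], [t], rfl, rfl, h⟩
    · exact ⟨[t], [], by simp_all [applyRule]⟩
  | case3 t u rest hr ih =>
    rcases P with _ | ⟨a, P⟩
    · exact ⟨[], t :: u :: rest, rfl, rfl, h⟩
    · rw [applyRule, if_pos hr, List.cons_append, List.cons.injEq] at h
      obtain ⟨rfl, h⟩ := h
      obtain ⟨P', Q', rfl, rfl, rfl⟩ := ih h
      exact ⟨t :: u :: P', Q', rfl, by rw [applyRule, if_pos hr], rfl⟩
  | case4 t u rest hr ih =>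
    rcases P with _ | ⟨a, P⟩
    · exact ⟨[], t :: u :: rest, rfl, rfl, h⟩
    · rw [applyRule, if_neg hr, List.cons_append, List.cons.injEq] at h
      obtain ⟨rfl, h⟩ := h
      obtain ⟨P', Q', hrest, rfl, rfl⟩ := ih h
      refine ⟨t :: P', Q', by rw [hrest, List.cons_append], ?_, rfl⟩
      rcases P' with _ | ⟨v, P'⟩
      · rfl
      · obtain rfl : u = v := (List.cons.inj hrest).1
        rw [applyRule, if_neg hr]

theorem exists_append_of_applyRules_eq_append {R : List (Rule α)} {φ P Q : List (Token α)}
    (h : applyRules R φ = P ++ Q) :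
    ∃ P' Q', φ = P' ++ Q' ∧ applyRules R P' = P ∧ applyRules R Q' = Q := by
  induction R generalizing φ with
  | nil => exact ⟨P, Q, h, rfl, rfl⟩
  | cons r R ih =>
    obtain ⟨P₁, Q₁, h₁, rfl, rfl⟩ := ih h
    obtain ⟨P', Q', rfl, rfl, rfl⟩ := exists_append_of_applyRule_eq_append h₁
    exact ⟨P', Q', rfl, rfl, rfl⟩

end ApplyRules

section Stages

variable {D : Dict α} {s : List α} {i k : ℕ} {P Q : List (Token α)}

theorem detok_phi0 {β : Type*} (s : List β) : detok (phi0 s) = s :=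
  s.flatMap_singleton'

theorem detok_phiK (D : Dict α) (k : ℕ) (s : List α) : detok (phiK D k s) = s :=
  (detok_applyRules _ _).trans (detok_phi0 s)

theorem phiK_eq_applyRules_of_le (D : Dict α) (s : List α) (hik : i ≤ k) :
    phiK D k s = applyRules ((D.take k).drop i) (phiK D i s) := by
  rw [applyRules, phiK, phiK, ← List.foldl_append]
  congr 1
  conv_lhs => rw [← List.take_append_drop i (D.take k), List.take_take, min_eq_left hik]

theorem antitone_length_phiK (D : Dict α) (s : List α) :
    Antitone fun k => (phiK D k s).length := fun i k hik => by
  simp only [phiK_eq_applyRules_of_le D s hik]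
  exact length_applyRules_le _ _

theorem phiK_nil (D : Dict α) (k : ℕ) : phiK D k [] = [] :=
  List.eq_nil_of_length_eq_zero <| Nat.le_zero.mp <| length_applyRules_le _ _

theorem phiK_detok_of_eq_append (h : phiK D k s = P ++ Q) :
    phiK D k (detok P) = P ∧ phiK D k (detok Q) = Q := by
  obtain ⟨P₀, Q₀, h₀, rfl, rfl⟩ := exists_append_of_applyRules_eq_append h
  obtain ⟨s₁, s₂, rfl, rfl, rfl⟩ := List.map_eq_append_iff.mp h₀
  exact ⟨congrArg (phiK D k) (detok_phiK D k s₁), congrArg (phiK D k) (detok_phiK D k s₂)⟩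

theorem phiK_eq_append_of_le (h : phiK D k s = P ++ Q) (hik : i ≤ k) :
    phiK D i s = phiK D i (detok P) ++ phiK D i (detok Q) := by
  rw [phiK_eq_applyRules_of_le D s hik] at h
  obtain ⟨P', Q', h', rfl, rfl⟩ := exists_append_of_applyRules_eq_append h
  obtain ⟨hP', hQ'⟩ := phiK_detok_of_eq_append h'
  rw [detok_applyRules, detok_applyRules, hP', hQ', h']

end Stages

section CanonicalRule

variable {D : Dict α} {t : Token α} {j k : ℕ}

theorem IsCanonicalRuleIdx.lt_of_phiK_eq_singleton (hj : IsCanonicalRuleIdx D t j)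
    (h : phiK D k t = [t]) : j < k := by
  by_contra! hkj
  have hlen : (phiK D j t).length ≤ (phiK D k t).length := antitone_length_phiK D t hkj
  rw [hj.2.1, h] at hlen
  exact Nat.not_succ_le_self 1 hlen

theorem IsCanonicalRuleIdx.unique {i : ℕ} (hi : IsCanonicalRuleIdx D t i)
    (hj : IsCanonicalRuleIdx D t j) : i = j :=
  le_antisymm (Nat.le_of_lt_succ (hi.lt_of_phiK_eq_singleton hj.2.2))
    (Nat.le_of_lt_succ (hj.lt_of_phiK_eq_singleton hi.2.2))

theorem IsCanonicalRuleIdx.canonIdx_eq (hj : IsCanonicalRuleIdx D t j) : canonIdx D t = j := by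
  have hex : ∃ i, IsCanonicalRuleIdx D t i := ⟨j, hj⟩
  rw [canonIdx, dif_pos hex]
  exact hex.choose_spec.unique hj

theorem canonIdx_le_of_phiK_eq_singleton (h : phiK D k t = [t]) : canonIdx D t ≤ k := by
  by_cases hex : ∃ j, IsCanonicalRuleIdx D t j
  · obtain ⟨j, hj⟩ := hex
    exact hj.canonIdx_eq.trans_le (hj.lt_of_phiK_eq_singleton h).le
  · rw [canonIdx, dif_neg hex]
    exact k.zero_le

end CanonicalRule

section Occurrences

variable {D : Dict α} {s : List α} {t u x y : Token α} {i k p : ℕ}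

theorem occursAt_getLastD {β : Type*} {φ : List (Token β)} (hφ : φ ≠ []) (d : Token β) :
    OccursAt (φ.getLastD d) φ (detok φ).length := by
  obtain ⟨L, b, rfl⟩ := φ.eq_nil_or_concat.resolve_left hφ
  exact ⟨L, [], by simp, by simp [detok]⟩

theorem OccursAt.phiK_eq_singleton (h : OccursAt t (phiK D k s) p) : phiK D k t = [t] := by
  obtain ⟨a, b, hab, -⟩ := h
  have hat : phiK D k (detok (a ++ [t])) = a ++ [t] := (phiK_detok_of_eq_append hab).1
  simpa only [detok, List.flatten_singleton] using (phiK_detok_of_eq_append hat).2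

theorem OccursAt.ne_nil (h : OccursAt t (phiK D k s) p) : t ≠ [] := by
  rintro rfl
  simpa only [phiK_nil, List.nil_eq, reduceCtorEq] using h.phiK_eq_singleton

theorem OccursAt.of_occursAt_phiK_token (h : OccursAt t (phiK D k s) p) (hik : i ≤ k)
    (hu : OccursAt u (phiK D i t) t.length) : OccursAt u (phiK D i s) p := by
  obtain ⟨a, b, hab, rfl⟩ := h
  obtain ⟨c, d, hcd, hlen⟩ := hu
  have hat : phiK D k (detok (a ++ [t])) = a ++ [t] := (phiK_detok_of_eq_append hab).1
  have hs : phiK D i s = phiK D i (detok a) ++ phiK D i t ++ phiK D i (detok b) := by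
    rw [phiK_eq_append_of_le hab hik, phiK_eq_append_of_le hat hik]
    simp only [detok, List.flatten_singleton]
  refine ⟨phiK D i (detok a) ++ c, d ++ phiK D i (detok b), ?_, ?_⟩
  · simp only [hs, hcd, List.append_assoc]
  · have hac : detok (phiK D i (detok a) ++ c) = detok a ++ detok c := by
      rw [detok, List.flatten_append, ← detok, detok_phiK, ← detok]
    rw [hac, List.length_append, add_assoc, hlen]

-- If `t` has no canonical rule, `canonIdx D t` is the junk value `0` and `suc D t` is the last
-- character of `t`.
theorem occursAt_suc (D : Dict α) (ht : t ≠ []) :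
    OccursAt (suc D t) (phiK D (canonIdx D t) t) t.length := by
  have hdetok := detok_phiK D (canonIdx D t) t
  have hne : phiK D (canonIdx D t) t ≠ [] := fun hnil => ht (by rw [← hdetok, hnil]; rfl)
  simpa only [suc, hdetok] using occursAt_getLastD hne []

theorem OccursAt.suc_canonIdx (h : OccursAt t (phiK D k s) p) :
    OccursAt (suc D t) (phiK D (canonIdx D t) s) p :=
  h.of_occursAt_phiK_token (canonIdx_le_of_phiK_eq_singleton h.phiK_eq_singleton)
    (occursAt_suc D h.ne_nil)

theorem OccursAt.exists_le_of_inPath (h : OccursAt y (phiK D k s) p) (hpath : InPath D y x) :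
    ∃ k' ≤ k, OccursAt x (phiK D k' s) p := by
  obtain ⟨n, rfl⟩ := hpath
  induction n generalizing y k with
  | zero => exact ⟨k, le_rfl, h⟩
  | succ n ih =>
    obtain ⟨k', hk', hx⟩ := ih h.suc_canonIdx
    exact ⟨k', hk'.trans (canonIdx_le_of_phiK_eq_singleton h.phiK_eq_singleton), hx⟩

theorem InPath.suc_of_ne (hpath : InPath D y x) (hne : x ≠ y) : InPath D (suc D y) x := by
  obtain ⟨_ | n, hn⟩ := hpath
  · exact absurd hn.symm hne
  · exact ⟨n, hn⟩

theorem shared_right_boundary_general {j : ℕ} (hpath : InPath D y x) (hne : x ≠ y)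
    (hj : IsCanonicalRuleIdx D y j) (hocc : OccursAt y (phiK D k s) p) :
    ∃ k' ≤ j, OccursAt x (phiK D k' s) p := by
  have hsuc : OccursAt (suc D y) (phiK D j s) p := hj.canonIdx_eq ▸ hocc.suc_canonIdx
  exact hsuc.exists_le_of_inPath (hpath.suc_of_ne hne)

end Occurrences

/-- **Shared right boundary.** Let `x`, `y` be canonical with `x ∈ P(y)`, `x ≠ y`,
and let `j` (0-based) index the canonical rule of `y`. If `y` occurs in `φ_k(s)`
with right boundary at `p` for some stage `k` at or after the canonical rule of `y`,
then `x` occurs at some strictly earlier stage `k' ≤ j` with the same right boundary. -/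
theorem shared_right_boundary [Fintype α] (D : Dict α) (hD : ValidDict D)
    (x y : Token α) (hx : IsCanonical D x) (hy : IsCanonical D y)
    (hpath : InPath D y x) (hne : x ≠ y)
    (j : ℕ) (hj : IsCanonicalRuleIdx D y j)
    (s : List α) (k : ℕ) (hk1 : j + 1 ≤ k) (hk2 : k ≤ D.length)
    (p : ℕ) (hocc : OccursAt y (phiK D k s) p) :
    ∃ k' ≤ j, OccursAt x (phiK D k' s) p := by
  exact shared_right_boundary_general hpath hne hj hocc

end BPE
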